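/- For each p ∈ {0,1}, sup_{t ≥ 0} |φ_p^{(n)}(t) − φ_p(t)| → 0 as n → ∞. -/

import Mathlib

open MeasureTheory Filter Topology Set
open scoped NNReal BoundedContinuousFunction Nat

/-!
For a random variable `X ≥ 0` put `M_p(t) = E[X^p e^{-tX}]`, so that
`E[X^p (1 - e^{-tX})] = M_p(0) - M_p(t)`. For `t > 0` the function `x ↦ x^p e^{-tx}` is bounded and
continuous on `[0,∞)`, so convergence in distribution gives pointwise convergence of `M_p(t)`. The
case `t = 0` is obtained by letting `t → 0`, uniformly along the sequence, because
`0 ≤ M_p(0) - M_p(t) ≤ t E[X^{p+1}]`. Finally, `M_p` is antitone and nonnegative, and for the limit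
variable it is continuous and vanishes at `∞`, so pointwise convergence is uniform by Pólya's
argument.
-/

section Polya

variable {ι α : Type*} {l : Filter ι} {F : ι → α → ℝ} {f : α → ℝ}
  [LinearOrder α] [TopologicalSpace α] [OrderTopology α]

theorem tendstoLocallyUniformly_of_antitone (hF : ∀ i, Antitone (F i)) (hf : Continuous f)
    (hlim : ∀ x, Tendsto (fun i => F i x) l (𝓝 (f x))) : TendstoLocallyUniformly F f l := by
  rw [Metric.tendstoLocallyUniformly_iff]
  intro ε hε x
  have hball : f ⁻¹' Metric.ball (f x) (ε / 4) ∈ 𝓝 x :=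
    hf.continuousAt (Metric.ball_mem_nhds _ (by positivity))
  obtain ⟨b, c, hx, hbc, hsub⟩ := exists_Icc_mem_subset_of_mem_nhds hball
  have hclose : ∀ y ∈ Icc b c, |f y - f x| < ε / 4 := fun y hy => hsub hy
  have hlim_close : ∀ y, ∀ᶠ i in l, |F i y - f y| < ε / 4 := fun y =>
    (hlim y).eventually (Metric.ball_mem_nhds _ (by positivity))
  refine ⟨Icc b c, hbc, ?_⟩
  filter_upwards [hlim_close b, hlim_close c] with i hib hic y hy
  have hb := hclose b (left_mem_Icc.2 (hx.1.trans hx.2))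
  have hc := hclose c (right_mem_Icc.2 (hx.1.trans hx.2))
  have hfy := hclose y hy
  have hFb : F i y ≤ F i b := hF i hy.1
  have hFc : F i c ≤ F i y := hF i hy.2
  rw [abs_lt] at hib hic hb hc hfy
  rw [Real.dist_eq, abs_lt]
  constructor <;> linarith

theorem tendstoUniformly_of_antitone_of_tendsto_atTop_zero [OrderBot α] [CompactIccSpace α]
    (hF : ∀ i, Antitone (F i)) (hF_nonneg : ∀ i x, 0 ≤ F i x) (hf : Continuous f)
    (hlim : ∀ x, Tendsto (fun i => F i x) l (𝓝 (f x))) (hf_zero : Tendsto f atTop (𝓝 0)) :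
    TendstoUniformly F f l := by
  rw [Metric.tendstoUniformly_iff]
  intro ε hε
  have htail : ∀ᶠ x in atTop, |f x| < ε / 2 := by
    simpa using hf_zero.eventually (Metric.ball_mem_nhds 0 (half_pos hε))
  obtain ⟨T, hT⟩ := eventually_atTop.1 htail
  have hcompact : TendstoUniformlyOn F f l (Icc ⊥ T) :=
    (tendstoLocallyUniformlyOn_iff_tendstoUniformlyOn_of_compact isCompact_Icc).1
      (tendstoLocallyUniformly_of_antitone hF hf hlim).tendstoLocallyUniformlyOn
  filter_upwards [Metric.tendstoUniformlyOn_iff.1 hcompact ε hε,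
    (hlim T).eventually_lt_const (lt_of_abs_lt (hT T le_rfl))] with i hi hiT x
  rcases le_total x T with hxT | hTx
  · exact hi x ⟨bot_le, hxT⟩
  · have hfx := abs_lt.1 (hT x hTx)
    have hFx : F i x ≤ F i T := hF i hTx
    have hFx_nonneg := hF_nonneg i x
    rw [Real.dist_eq, abs_lt]
    constructor <;> linarith

end Polya

/-- The exponentially damped moment `E[X^p e^{-tX}]`, which up to sign is the `p`-th derivative of
the Laplace transform of `X`. The parameter `t` lives in `ℝ≥0` because the integral is controlled
by moments of a nonnegative `X` only for such `t`. -/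
noncomputable def dampedMoment {Ω : Type*} [MeasurableSpace Ω] (P : Measure Ω) (X : Ω → ℝ) (p : ℕ)
    (t : ℝ≥0) : ℝ :=
  ∫ ω, X ω ^ p * Real.exp (-X ω * t) ∂P

section DampedMoment

variable {Ω : Type*} [MeasurableSpace Ω] {P : Measure Ω} {X : Ω → ℝ} {p : ℕ}

theorem integrable_pow_of_le [IsFiniteMeasure P] {q : ℕ} (hX : AEMeasurable X P) (hpq : p ≤ q)
    (hXq : Integrable (fun ω => X ω ^ q) P) : Integrable (fun ω => X ω ^ p) P := by
  have hnorm : Integrable (fun ω => ‖X ω‖ ^ p) P :=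
    integrable_norm_pow_of_le hX.aestronglyMeasurable hpq (by simpa only [norm_pow] using hXq.norm)
  rw [← integrable_norm_iff (hX.pow_const p).aestronglyMeasurable]
  simpa only [norm_pow] using hnorm

theorem norm_pow_mul_exp_neg_mul_le (p : ℕ) {x : ℝ} (hx : 0 ≤ x) (t : ℝ≥0) :
    ‖x ^ p * Real.exp (-x * t)‖ ≤ x ^ p := by
  have hexp : Real.exp (-x * t) ≤ 1 :=
    Real.exp_le_one_iff.2 (mul_nonpos_of_nonpos_of_nonneg (neg_nonpos.2 hx) t.coe_nonneg)
  rw [Real.norm_of_nonneg (by positivity)]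
  exact mul_le_of_le_one_right (by positivity) hexp

theorem aestronglyMeasurable_pow_mul_exp (hX : AEMeasurable X P) (p : ℕ) (t : ℝ≥0) :
    AEStronglyMeasurable (fun ω => X ω ^ p * Real.exp (-X ω * t)) P :=
  AEMeasurable.aestronglyMeasurable (by fun_prop)

theorem integrable_pow_mul_exp (hX : AEMeasurable X P) (hX_nonneg : 0 ≤ᵐ[P] X)
    (hXp : Integrable (fun ω => X ω ^ p) P) (t : ℝ≥0) :
    Integrable (fun ω => X ω ^ p * Real.exp (-X ω * t)) P :=
  hXp.mono' (aestronglyMeasurable_pow_mul_exp hX p t)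
    (hX_nonneg.mono fun _ hω => norm_pow_mul_exp_neg_mul_le p hω t)

theorem dampedMoment_zero (P : Measure Ω) (X : Ω → ℝ) (p : ℕ) :
    dampedMoment P X p 0 = ∫ ω, X ω ^ p ∂P := by
  simp [dampedMoment]

theorem dampedMoment_nonneg (hX_nonneg : 0 ≤ᵐ[P] X) (p : ℕ) (t : ℝ≥0) :
    0 ≤ dampedMoment P X p t :=
  integral_nonneg_of_ae <|
    hX_nonneg.mono fun _ hω => mul_nonneg (pow_nonneg hω p) (Real.exp_nonneg _)

theorem antitone_dampedMoment (hX : AEMeasurable X P) (hX_nonneg : 0 ≤ᵐ[P] X)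
    (hXp : Integrable (fun ω => X ω ^ p) P) : Antitone (dampedMoment P X p) := by
  intro s t hst
  refine integral_mono_ae (integrable_pow_mul_exp hX hX_nonneg hXp t)
    (integrable_pow_mul_exp hX hX_nonneg hXp s) ?_
  filter_upwards [hX_nonneg] with ω hω
  have hexponent : -X ω * t ≤ -X ω * s :=
    mul_le_mul_of_nonpos_left (NNReal.coe_le_coe.2 hst) (neg_nonpos.2 hω)
  exact mul_le_mul_of_nonneg_left (Real.exp_le_exp.2 hexponent) (pow_nonneg hω p)

theorem continuous_dampedMoment (hX : AEMeasurable X P) (hX_nonneg : 0 ≤ᵐ[P] X)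
    (hXp : Integrable (fun ω => X ω ^ p) P) : Continuous (dampedMoment P X p) :=
  continuous_of_dominated (aestronglyMeasurable_pow_mul_exp hX p)
    (fun t => hX_nonneg.mono fun _ hω => norm_pow_mul_exp_neg_mul_le p hω t) hXp
    (ae_of_all _ fun _ => by fun_prop)

theorem tendsto_dampedMoment_atTop_zero (hX : AEMeasurable X P) (hX_pos : ∀ᵐ ω ∂P, 0 < X ω)
    (hXp : Integrable (fun ω => X ω ^ p) P) :
    Tendsto (dampedMoment P X p) atTop (𝓝 0) := by
  rw [← integral_zero Ω ℝ (μ := P)]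
  refine tendsto_integral_filter_of_dominated_convergence _
    (Eventually.of_forall (aestronglyMeasurable_pow_mul_exp hX p))
    (Eventually.of_forall fun t => hX_pos.mono fun _ hω => norm_pow_mul_exp_neg_mul_le p hω.le t)
    hXp ?_
  filter_upwards [hX_pos] with ω hω
  have hexponent : Tendsto (fun t : ℝ≥0 => -X ω * t) atTop atBot :=
    (NNReal.tendsto_coe_atTop.2 tendsto_id).const_mul_atTop_of_neg (neg_lt_zero.2 hω)
  simpa using (Real.tendsto_exp_atBot.comp hexponent).const_mul (X ω ^ p)

theorem integral_pow_mul_one_sub_exp (hX : AEMeasurable X P) (hX_nonneg : 0 ≤ᵐ[P] X)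
    (hXp : Integrable (fun ω => X ω ^ p) P) (t : ℝ≥0) :
    ∫ ω, X ω ^ p * (1 - Real.exp (-X ω * t)) ∂P = (∫ ω, X ω ^ p ∂P) - dampedMoment P X p t := by
  simp only [mul_sub, mul_one]
  exact integral_sub hXp (integrable_pow_mul_exp hX hX_nonneg hXp t)

theorem dist_integral_pow_dampedMoment_le [IsFiniteMeasure P] (hX : AEMeasurable X P)
    (hX_nonneg : 0 ≤ᵐ[P] X) (hXp : Integrable (fun ω => X ω ^ (p + 1)) P) (t : ℝ≥0) :
    dist (∫ ω, X ω ^ p ∂P) (dampedMoment P X p t) ≤ t * ∫ ω, X ω ^ (p + 1) ∂P := by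
  rw [Real.dist_eq, ← integral_pow_mul_one_sub_exp hX hX_nonneg
    (integrable_pow_of_le hX p.le_succ hXp), ← integral_const_mul, ← Real.norm_eq_abs]
  refine norm_integral_le_of_norm_le (hXp.const_mul _) ?_
  filter_upwards [hX_nonneg] with ω (hω : 0 ≤ X ω)
  have hXt : 0 ≤ X ω * t := by positivity
  have hlower : 0 ≤ 1 - Real.exp (-X ω * t) :=
    sub_nonneg.2 (Real.exp_le_one_iff.2 (by linarith))
  have hupper : 1 - Real.exp (-X ω * t) ≤ X ω * t := by
    linarith [Real.add_one_le_exp (-X ω * t)]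
  rw [Real.norm_of_nonneg (by positivity)]
  calc X ω ^ p * (1 - Real.exp (-X ω * t)) ≤ X ω ^ p * (X ω * t) := by gcongr
    _ = t * X ω ^ (p + 1) := by ring

end DampedMoment

theorem pow_mul_exp_neg_mul_le_factorial_div {x t : ℝ} (hx : 0 ≤ x) (ht : 0 < t) (p : ℕ) :
    x ^ p * Real.exp (-x * t) ≤ p ! / t ^ p := by
  have hexp : (x * t) ^ p ≤ p ! * Real.exp (x * t) := by
    rw [← div_le_iff₀' (by positivity)]
    exact Real.pow_div_factorial_le_exp _ (by positivity) p
  rw [neg_mul, Real.exp_neg, ← div_eq_mul_inv, div_le_div_iff₀ (Real.exp_pos _) (by positivity),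
    ← mul_pow]
  exact hexp

theorem tendstoInDistribution_iff_forall_integral_tendsto {ι E Ω' : Type*} {Ω : ι → Type*}
    [∀ i, MeasurableSpace (Ω i)] [MeasurableSpace Ω'] [TopologicalSpace E] [MeasurableSpace E]
    [OpensMeasurableSpace E] {P : ∀ i, Measure (Ω i)} [∀ i, IsProbabilityMeasure (P i)]
    {P' : Measure Ω'} [IsProbabilityMeasure P'] {X : ∀ i, Ω i → E} {Z : Ω' → E} {l : Filter ι}
    (hX : ∀ i, AEMeasurable (X i) (P i)) (hZ : AEMeasurable Z P') :
    TendstoInDistribution X l Z P P' ↔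
      ∀ f : E →ᵇ ℝ, Tendsto (fun i => ∫ ω, f (X i ω) ∂P i) l (𝓝 (∫ ω, f (Z ω) ∂P')) := by
  have hlaw : TendstoInDistribution X l Z P P' ↔ _ := ⟨fun h => h.tendsto, fun h => ⟨hX, hZ, h⟩⟩
  refine hlaw.trans (ProbabilityMeasure.tendsto_iff_forall_integral_tendsto.trans ?_)
  refine forall_congr' fun f => ?_
  have hf_meas {μ : Measure E} : AEStronglyMeasurable f μ :=
    f.continuous.measurable.aestronglyMeasurable
  simp only [ProbabilityMeasure.coe_mk, integral_map (hX _) hf_meas, integral_map hZ hf_meas]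

section ConvergenceInDistribution

variable {ι Ω' : Type*} {Ω : ι → Type*} [∀ i, MeasurableSpace (Ω i)] [MeasurableSpace Ω']
  {P : ∀ i, Measure (Ω i)} [∀ i, IsProbabilityMeasure (P i)]
  {P' : Measure Ω'} [IsProbabilityMeasure P']
  {X : ∀ i, Ω i → ℝ} {Z : Ω' → ℝ} {l : Filter ι} {p q : ℕ}

theorem tendsto_dampedMoment_of_pos (h : TendstoInDistribution X l Z P P')
    (hX_nonneg : ∀ i, 0 ≤ᵐ[P i] X i) (hZ_nonneg : 0 ≤ᵐ[P'] Z) (p : ℕ) {t : ℝ≥0} (ht : 0 < t) :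
    Tendsto (fun i => dampedMoment (P i) (X i) p t) l (𝓝 (dampedMoment P' Z p t)) := by
  -- `x ^ p * exp (-x * t)` is unbounded for `x < 0`, hence the `max x 0`.
  let f : ℝ →ᵇ ℝ := .ofNormedAddCommGroup (fun x => max x 0 ^ p * Real.exp (-max x 0 * t))
    (by fun_prop) (p ! / t ^ p) fun x => by
      rw [Real.norm_of_nonneg (by positivity)]
      exact pow_mul_exp_neg_mul_le_factorial_div (le_max_right x 0) ht p
  have hf {x : ℝ} (hx : 0 ≤ x) : f x = x ^ p * Real.exp (-x * t) := by
    simp [f, max_eq_left hx]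
  have hfX (i : ι) : ∫ ω, f (X i ω) ∂P i = dampedMoment (P i) (X i) p t :=
    integral_congr_ae ((hX_nonneg i).mono fun _ hω => hf hω)
  have hfZ : ∫ ω, f (Z ω) ∂P' = dampedMoment P' Z p t :=
    integral_congr_ae (hZ_nonneg.mono fun _ hω => hf hω)
  simpa only [hfX, hfZ] using (tendstoInDistribution_iff_forall_integral_tendsto
    h.forall_aemeasurable h.aemeasurable_limit).1 h f

theorem tendsto_integral_pow_of_eventually_integral_pow_succ_le
    (h : TendstoInDistribution X l Z P P')
    (hX_nonneg : ∀ i, 0 ≤ᵐ[P i] X i) (hZ_nonneg : 0 ≤ᵐ[P'] Z)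
    (hXp : ∀ i, Integrable (fun ω => X i ω ^ (p + 1)) (P i))
    (hZp : Integrable (fun ω => Z ω ^ p) P') {C : ℝ}
    (hC : ∀ᶠ i in l, ∫ ω, X i ω ^ (p + 1) ∂P i ≤ C) :
    Tendsto (fun i => ∫ ω, X i ω ^ p ∂P i) l (𝓝 (∫ ω, Z ω ^ p ∂P')) := by
  have hvanish : Tendsto (fun t : ℝ≥0 => t * C) (𝓝[>] 0) (𝓝 0) :=
    tendsto_nhdsWithin_of_tendsto_nhds (Continuous.tendsto' (by fun_prop) _ _ (by simp))
  have hunif : TendstoUniformlyOnFilter (fun t i => dampedMoment (P i) (X i) p t)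
      (fun i => ∫ ω, X i ω ^ p ∂P i) (𝓝[>] 0) l := by
    rw [Metric.tendstoUniformlyOnFilter_iff]
    intro ε hε
    filter_upwards [(hvanish.eventually_lt_const hε).prod_mk hC] with ⟨t, i⟩ ⟨htC, hiC⟩
    calc dist (∫ ω, X i ω ^ p ∂P i) (dampedMoment (P i) (X i) p t)
        ≤ t * ∫ ω, X i ω ^ (p + 1) ∂P i :=
          dist_integral_pow_dampedMoment_le (h.forall_aemeasurable i) (hX_nonneg i) (hXp i) t
      _ ≤ t * C := by gcongr
      _ < ε := htC
  have hlimit : Tendsto (dampedMoment P' Z p) (𝓝[>] 0) (𝓝 (∫ ω, Z ω ^ p ∂P')) :=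
    tendsto_nhdsWithin_of_tendsto_nhds <|
      (continuous_dampedMoment h.aemeasurable_limit hZ_nonneg hZp).tendsto' _ _
        (dampedMoment_zero P' Z p)
  exact hunif.tendsto_of_eventually_tendsto
    (eventually_mem_nhdsWithin.mono fun _ ht =>
      tendsto_dampedMoment_of_pos h hX_nonneg hZ_nonneg p ht) hlimit

theorem tendsto_integral_pow_of_le (h : TendstoInDistribution X l Z P P')
    (hX_nonneg : ∀ i, 0 ≤ᵐ[P i] X i) (hZ_nonneg : 0 ≤ᵐ[P'] Z)
    (hXq : ∀ i, Integrable (fun ω => X i ω ^ q) (P i)) (hZq : Integrable (fun ω => Z ω ^ q) P')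
    (hmoment : Tendsto (fun i => ∫ ω, X i ω ^ q ∂P i) l (𝓝 (∫ ω, Z ω ^ q ∂P'))) (hpq : p ≤ q) :
    Tendsto (fun i => ∫ ω, X i ω ^ p ∂P i) l (𝓝 (∫ ω, Z ω ^ p ∂P')) := by
  induction hpq using Nat.decreasingInduction with
  | self => exact hmoment
  | of_succ k hk ih =>
    exact tendsto_integral_pow_of_eventually_integral_pow_succ_le h hX_nonneg hZ_nonneg
      (fun i => integrable_pow_of_le (h.forall_aemeasurable i) hk (hXq i))
      (integrable_pow_of_le h.aemeasurable_limit hk.le hZq)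
      ((ih.eventually_lt_const (lt_add_one _)).mono fun _ => le_of_lt)

theorem tendstoUniformly_dampedMoment (h : TendstoInDistribution X l Z P P')
    (hX_nonneg : ∀ i, 0 ≤ᵐ[P i] X i) (hZ_pos : ∀ᵐ ω ∂P', 0 < Z ω)
    (hXp : ∀ i, Integrable (fun ω => X i ω ^ p) (P i)) (hZp : Integrable (fun ω => Z ω ^ p) P')
    (hmoment : Tendsto (fun i => ∫ ω, X i ω ^ p ∂P i) l (𝓝 (∫ ω, Z ω ^ p ∂P'))) :
    TendstoUniformly (fun i => dampedMoment (P i) (X i) p) (dampedMoment P' Z p) l := by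
  have hZ_nonneg : 0 ≤ᵐ[P'] Z := hZ_pos.mono fun _ => le_of_lt
  refine tendstoUniformly_of_antitone_of_tendsto_atTop_zero
    (fun i => antitone_dampedMoment (h.forall_aemeasurable i) (hX_nonneg i) (hXp i))
    (fun i => dampedMoment_nonneg (hX_nonneg i) p)
    (continuous_dampedMoment h.aemeasurable_limit hZ_nonneg hZp) (fun t => ?_)
    (tendsto_dampedMoment_atTop_zero h.aemeasurable_limit hZ_pos hZp)
  rcases eq_zero_or_pos t with rfl | ht
  · simpa only [dampedMoment_zero] using hmoment
  · exact tendsto_dampedMoment_of_pos h hX_nonneg hZ_nonneg p ht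

theorem stmt_3_general (h : TendstoInDistribution X l Z P P')
    (hX_nonneg : ∀ i, 0 ≤ᵐ[P i] X i) (hZ_pos : ∀ᵐ ω ∂P', 0 < Z ω)
    (hXq : ∀ i, Integrable (fun ω => X i ω ^ q) (P i)) (hZq : Integrable (fun ω => Z ω ^ q) P')
    (hmoment : Tendsto (fun i => ∫ ω, X i ω ^ q ∂P i) l (𝓝 (∫ ω, Z ω ^ q ∂P'))) (hpq : p ≤ q) :
    TendstoUniformlyOn (fun i t => ∫ ω, X i ω ^ p * (1 - Real.exp (-X i ω * t)) ∂P i)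
      (fun t => ∫ ω, Z ω ^ p * (1 - Real.exp (-Z ω * t)) ∂P') l (Ici 0) := by
  have hZ_nonneg : 0 ≤ᵐ[P'] Z := hZ_pos.mono fun _ => le_of_lt
  have hXp (i : ι) := integrable_pow_of_le (h.forall_aemeasurable i) hpq (hXq i)
  have hZp := integrable_pow_of_le h.aemeasurable_limit hpq hZq
  have hmoment_p := tendsto_integral_pow_of_le h hX_nonneg hZ_nonneg hXq hZq hmoment hpq
  have hsub := hmoment_p.tendstoUniformly_const.sub
    (tendstoUniformly_dampedMoment h hX_nonneg hZ_pos hXp hZp hmoment_p)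
  rw [Metric.tendstoUniformlyOn_iff]
  intro ε hε
  filter_upwards [Metric.tendstoUniformly_iff.1 hsub ε hε] with i hi t ht
  lift t to ℝ≥0 using ht
  rw [integral_pow_mul_one_sub_exp (h.forall_aemeasurable i) (hX_nonneg i) (hXp i),
    integral_pow_mul_one_sub_exp h.aemeasurable_limit hZ_nonneg hZp]
  exact hi t

end ConvergenceInDistribution

/-- Under Assumption 1, for `p ∈ {0,1}` the functions
`φ_p⁽ⁿ⁾(t) = E[Wₙ^p (1 - e^{-Wₙ t})]` converge to `φ_p(t) = E[W^p (1 - e^{-W t})]`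
uniformly on `[0,∞)`, i.e. `sup_{t ≥ 0} |φ_p⁽ⁿ⁾(t) - φ_p(t)| → 0`. -/
theorem stmt_3
    {Ω : Type*} [MeasurableSpace Ω] (P : Measure Ω) [IsProbabilityMeasure P]
    (W : Ω → ℝ) (Wn : ℕ → Ω → ℝ)
    (hWmeas : Measurable W) (hWnmeas : ∀ n, Measurable (Wn n))
    (hWpos : ∀ᵐ ω ∂P, 0 < W ω) (hWnpos : ∀ n, ∀ᵐ ω ∂P, 0 < Wn n ω)
    (hdist : ∀ f : BoundedContinuousFunction ℝ ℝ,
      Tendsto (fun n => ∫ ω, f (Wn n ω) ∂P) atTop (𝓝 (∫ ω, f (W ω) ∂P)))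
    (hW2 : Integrable (fun ω => (W ω) ^ 2) P)
    (hWn2 : ∀ n, Integrable (fun ω => (Wn n ω) ^ 2) P)
    (hmom : Tendsto (fun n => ∫ ω, (Wn n ω) ^ 2 ∂P) atTop (𝓝 (∫ ω, (W ω) ^ 2 ∂P))) :
    ∀ p ∈ ({0, 1} : Set ℕ),
      TendstoUniformlyOn
        (fun n t => ∫ ω, (Wn n ω) ^ p * (1 - Real.exp (-(Wn n ω) * t)) ∂P)
        (fun t => ∫ ω, (W ω) ^ p * (1 - Real.exp (-(W ω) * t)) ∂P)
        atTop (Ici 0) := by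
  have h : TendstoInDistribution Wn atTop W (fun _ => P) P :=
    (tendstoInDistribution_iff_forall_integral_tendsto (fun n => (hWnmeas n).aemeasurable)
      hWmeas.aemeasurable).2 hdist
  rintro p (rfl | rfl) <;>
    exact stmt_3_general h (fun n => (hWnpos n).mono fun _ => le_of_lt) hWpos hWn2 hW2 hmom
      (by norm_num)
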